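/- arXiv:2604.06442 — 2 statements merged into one kernel-verified Lean document; each statement's English description precedes it below -/
import Mathlib

section
/- Let R be a Noetherian commutative ring and f ∈ R a nonzerodivisor, and suppose that R is integrally closed in the localization R[1/f], i.e., every element of R[1/f] that is integral over R lies in the image of the (injective) map R → R[1/f]. Let x ∈ R[1/f]. If for every prime ideal 𝔭 of R of height one with f ∈ 𝔭 the image of x in (R_𝔭)[1/f] lies in the image of R_𝔭 → (R_𝔭)[1/f], then x lies in the image of R → R[1/f]. -/
universe u

/-!
If `x ∉ R`, the ideal `(R : x)` lies in an associated prime `P = (R : y)` of `R[1/f] / R`, and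
`f ∈ P` because a power of `f` carries `y` into `R`. If `y P ⊆ P`, then `f yⁿ ∈ P ⊆ R` for all `n`,
so `y` is almost integral over the Noetherian ring `R`, hence integral, hence in `R`, which is
absurd. So some `u = p y` with `p ∈ P` lies in `R ∖ P`. Then `u P = p (y P) ⊆ p R`, so `P` is
minimal over `(p)` and has height one by Krull's principal ideal theorem. But `x` comes from `R_P`,
so some `s ∉ P` carries `x` into `R`, contradicting `(R : x) ⊆ P`.
-/

open scoped nonZeroDivisors

theorem exists_le_isAssociatedPrime_of_notMem {R M : Type*} [CommRing R] [IsNoetherianRing R]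
    [AddCommGroup M] [Module R M] {N : Submodule R M} {x : M} (hx : x ∉ N) :
    ∃ P : Ideal R, N.IsAssociatedPrime P ∧ N.colon {x} ≤ P := by
  have colon_mkQ (y : M) : (⊥ : Submodule R (M ⧸ N)).colon {N.mkQ y} = N.colon {y} := by
    ext r
    rw [Submodule.mem_colon_singleton, Submodule.mem_colon_singleton, Submodule.mem_bot,
      ← map_smul, Submodule.mkQ_apply, Submodule.Quotient.mk_eq_zero]
  have hx0 : N.mkQ x ≠ 0 := fun h ↦ hx ((Submodule.Quotient.mk_eq_zero N).1 h)
  obtain ⟨P, hP, hxP⟩ := exists_le_isAssociatedPrime_of_isNoetherianRing R _ hx0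
  obtain ⟨hprime, z, hz⟩ := isAssociatedPrime_iff.1 hP
  obtain ⟨y, rfl⟩ := N.mkQ_surjective z
  exact ⟨P, Submodule.isAssociatedPrime_iff.2 ⟨hprime, y, hz.trans (colon_mkQ y)⟩,
    (colon_mkQ x).symm.trans_le hxP⟩

section Extension

variable {R A : Type*} [CommRing R] [CommRing A] [Algebra R A]

theorem isAlmostIntegral_of_forall_mem_smul_mem {I : Ideal R} {f : R} (hf : f ∈ R⁰) (hfI : f ∈ I)
    {y : A} (hy : ∀ a ∈ I, ∃ b ∈ I, algebraMap R A b = a • y) : IsAlmostIntegral R y := by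
  have hpow (n : ℕ) : ∃ b ∈ I, algebraMap R A b = f • y ^ n := by
    induction n with
    | zero => exact ⟨f, hfI, by rw [pow_zero, Algebra.algebraMap_eq_smul_one]⟩
    | succ n ih =>
      obtain ⟨a, ha, hay⟩ := ih
      obtain ⟨b, hb, hby⟩ := hy a ha
      exact ⟨b, hb, by rw [hby, Algebra.smul_def, hay, smul_mul_assoc, ← pow_succ]⟩
  exact ⟨f, hf, fun n ↦ let ⟨b, _, hb⟩ := hpow n; ⟨b, hb⟩⟩

theorem mem_minimalPrimes_span_singleton_of_smul_eq
    (hinj : Function.Injective (algebraMap R A)) {P : Ideal R} [P.IsPrime] {y : A}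
    (hy : ∀ q ∈ P, q • y ∈ (algebraMap R A).range) {p u : R} (hp : p ∈ P) (hu : u ∉ P)
    (hpu : algebraMap R A u = p • y) : P ∈ (Ideal.span {p}).minimalPrimes := by
  refine ⟨⟨‹_›, (Ideal.span_singleton_le_iff_mem P).2 hp⟩, fun Q ⟨hQ, hpQ⟩ hQP q hq ↦ ?_⟩
  obtain ⟨r, hr⟩ := hy q hq
  have huq : u * q = p * r := hinj <| by
    simp only [map_mul, hpu, hr, Algebra.smul_def]
    ring
  have huqQ : u * q ∈ Q := huq ▸ Q.mul_mem_right r ((Ideal.span_singleton_le_iff_mem Q).1 hpQ)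
  exact (hQ.mem_or_mem huqQ).resolve_left fun huQ ↦ hu (hQP huQ)

theorem height_eq_one_of_isAssociatedPrime_one [IsNoetherianRing R] [IsIntegrallyClosedIn R A]
    (hA : R⁰ ≤ A⁰.comap (algebraMap R A)) {P : Ideal R}
    (hP : (1 : Submodule R A).IsAssociatedPrime P) {f : R} (hf : f ∈ R⁰) (hfP : f ∈ P) :
    P.height = 1 := by
  obtain ⟨hprime, y, hPy⟩ := Submodule.isAssociatedPrime_iff.1 hP
  have mem_iff (r : R) : r ∈ P ↔ r • y ∈ (algebraMap R A).range := by
    rw [hPy, Submodule.mem_colon_singleton, Submodule.mem_one, RingHom.mem_range]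
  obtain ⟨hinj, hclosed⟩ := isIntegrallyClosedIn_iff.1 ‹IsIntegrallyClosedIn R A›
  have hyR : y ∉ (algebraMap R A).range := fun hy ↦
    P.ne_top_iff_one.1 hprime.ne_top ((mem_iff 1).2 (by rwa [one_smul]))
  obtain ⟨p, hp, u, hu, hpu⟩ : ∃ p ∈ P, ∃ u ∉ P, algebraMap R A u = p • y := by
    by_contra! hstable
    have hy : IsAlmostIntegral R y := isAlmostIntegral_of_forall_mem_smul_mem hf hfP fun p hp ↦
      let ⟨q, hq⟩ := (mem_iff p).1 hp
      ⟨q, by_contra fun hqP ↦ hstable p hp q hqP hq, hq⟩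
    exact hyR (hclosed (hy.isIntegral_of_nonZeroDivisors_le_comap hA))
  apply le_antisymm
  · exact Ideal.height_le_one_of_isPrincipal_of_mem_minimalPrimes (Ideal.span {p}) P
      (mem_minimalPrimes_span_singleton_of_smul_eq hinj (fun q ↦ (mem_iff q).1) hp hu hpu)
  · exact (Ideal.one_le_height_span_singleton_of_mem_nonZeroDivisors hf).trans
      (Ideal.height_mono ((Ideal.span_singleton_le_iff_mem P).2 hfP))

end Extension

theorem exists_smul_mem_range_of_algebraMap_mem_range {R A S T : Type*} [CommRing R] [CommRing A]
    [CommRing S] [CommRing T] [Algebra R A] [Algebra R S] [Algebra R T] [Algebra A T] [Algebra S T]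
    [IsScalarTower R A T] [IsScalarTower R S T] (M : Submonoid R) [IsLocalization M S]
    [IsLocalization (Algebra.algebraMapSubmonoid A M) T] {x : A}
    (hx : algebraMap A T x ∈ (algebraMap S T).range) :
    ∃ s ∈ M, s • x ∈ (algebraMap R A).range := by
  obtain ⟨z, hz⟩ := hx
  obtain ⟨⟨r, s⟩, hrs⟩ := IsLocalization.surj M z
  have hsx : algebraMap A T ((s : R) • x) = algebraMap A T (algebraMap R A r) :=
    calc algebraMap A T ((s : R) • x)
        = algebraMap S T (z * algebraMap R S s) := by
          rw [Algebra.smul_def, map_mul, map_mul, hz, ← IsScalarTower.algebraMap_apply,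
            ← IsScalarTower.algebraMap_apply, mul_comm]
      _ = algebraMap A T (algebraMap R A r) := by
          rw [hrs, ← IsScalarTower.algebraMap_apply, ← IsScalarTower.algebraMap_apply]
  obtain ⟨⟨_, t, ht, rfl⟩, htx⟩ :=
    IsLocalization.exists_of_eq (M := Algebra.algebraMapSubmonoid A M) hsx
  exact ⟨t * s, M.mul_mem ht s.2, t * r, by rw [map_mul, mul_smul, Algebra.smul_def t, htx]⟩

theorem exists_smul_mem_range_of_awayMap_mem_range {R S : Type*} [CommRing R] [CommRing S]
    [Algebra R S] (M : Submonoid R) [IsLocalization M S] {f : R} {x : Localization.Away f}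
    (hx : Localization.awayMap (algebraMap R S) f x ∈
      (algebraMap S (Localization.Away (algebraMap R S f))).range) :
    ∃ s ∈ M, s • x ∈ (algebraMap R (Localization.Away f)).range := by
  let A := Localization.Away f
  let T := Localization.Away (algebraMap R S f)
  let := (Localization.awayMap (algebraMap R S) f).toAlgebra
  have : IsScalarTower R A T := .of_algebraMap_eq fun r ↦ by
    rw [RingHom.algebraMap_toAlgebra, Localization.awayMap, IsLocalization.Away.map,
      IsLocalization.map_eq, ← IsScalarTower.algebraMap_apply]
  have : IsLocalization (Algebra.algebraMapSubmonoid S (.powers f)) T := by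
    rw [Algebra.algebraMapSubmonoid_powers]
    infer_instance
  have : IsLocalization (Algebra.algebraMapSubmonoid A M) T :=
    IsLocalization.commutes A S T (.powers f) M
  exact exists_smul_mem_range_of_algebraMap_mem_range M hx

/-- The condition `∃ s ∉ P, s • x ∈ R` encodes that the image of `x` in `A_P` lies in the image of
`R_P`. -/
theorem statement1_general {R A : Type*} [CommRing R] [IsNoetherianRing R] [CommRing A]
    [Algebra R A] (M : Submonoid R) [IsLocalization M A] [IsIntegrallyClosedIn R A] {x : A}
    (hx : ∀ (P : Ideal R) [P.IsPrime], P.height = 1 → ((M : Set R) ∩ P).Nonempty →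
      ∃ s ∉ P, s • x ∈ (algebraMap R A).range) :
    x ∈ (algebraMap R A).range := by
  by_contra hxR
  obtain ⟨P, hP, hxP⟩ := exists_le_isAssociatedPrime_of_notMem (N := (1 : Submodule R A))
    (mt Submodule.mem_one.1 hxR)
  obtain ⟨hprime, y, hPy⟩ := Submodule.isAssociatedPrime_iff.1 hP
  obtain ⟨⟨b, m⟩, hb⟩ := IsLocalization.surj M y
  have hmP : (m : R) ∈ P := by
    rw [hPy, Submodule.mem_colon_singleton, Submodule.mem_one]
    exact ⟨b, by rw [Algebra.smul_def, mul_comm, hb]⟩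
  have hm : (m : R) ∈ R⁰ :=
    mem_nonZeroDivisors_of_injective (isIntegrallyClosedIn_iff.1 ‹IsIntegrallyClosedIn R A›).1
      (IsLocalization.map_units A m).mem_nonZeroDivisors
  have hheight : P.height = 1 := height_eq_one_of_isAssociatedPrime_one
    (IsLocalization.nonZeroDivisors_le_comap M A) hP hm hmP
  obtain ⟨s, hs, hsx⟩ := hx P hheight ⟨m, m.2, hmP⟩
  exact hs (hxP (Submodule.mem_colon_singleton.2 (Submodule.mem_one.2 hsx)))

/-- **Algebraic Hartogs extension.**  Let `R` be a Noetherian commutative ring and `f ∈ R` a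
nonzerodivisor such that `R` is integrally closed in `R[1/f]`.  If `x ∈ R[1/f]` is such that,
for every height-one prime `𝔭` of `R` containing `f`, the image of `x` in `(R_𝔭)[1/f]` lies in
the image of `R_𝔭`, then `x` lies in the image of `R`. -/
theorem statement1 {R : Type u} [CommRing R] [IsNoetherianRing R]
    (f : R) (hf : f ∈ nonZeroDivisors R)
    (hint : ∀ y : Localization.Away f, IsIntegral R y →
      y ∈ (algebraMap R (Localization.Away f)).range)
    (x : Localization.Away f)
    (hx : ∀ (𝔭 : Ideal R) (h𝔭 : 𝔭.IsPrime), Order.height (⟨𝔭, h𝔭⟩ : PrimeSpectrum R) = 1 →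
      f ∈ 𝔭 →
      Localization.awayMap (algebraMap R (Localization.AtPrime 𝔭)) f x ∈
        (algebraMap (Localization.AtPrime 𝔭)
          (Localization.Away (algebraMap R (Localization.AtPrime 𝔭) f))).range) :
    x ∈ (algebraMap R (Localization.Away f)).range := by
  have : IsIntegrallyClosedIn R (Localization.Away f) := isIntegrallyClosedIn_iff.2
    ⟨IsLocalization.injective _ (Submonoid.powers_le.2 hf), fun {y} ↦ hint y⟩
  refine statement1_general (.powers f) fun P hP hheight ⟨_, ⟨n, rfl⟩, hfnP⟩ ↦ ?_
  exact exists_smul_mem_range_of_awayMap_mem_range P.primeCompl <|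
    hx P hP ((PrimeSpectrum.height_eq_orderHeight ⟨P, hP⟩).symm.trans hheight)
      (hP.mem_of_pow_mem n hfnP)
end

section
/- Let p be a prime number and let R → R' be a homomorphism of commutative rings such that for every n ≥ 1 the induced ring homomorphism R/p^nR → R'/p^nR' is faithfully flat. Let M be an R-module every element of which is annihilated by some power of p. If M ⊗_R R' = 0, then M = 0. -/
universe u v

/-- The ring homomorphism `R/p^nR → R'/p^nR'` induced by a ring homomorphism `R → R'`
(given as an algebra structure). -/
noncomputable def pPowQuotMap (R : Type u) (R' : Type v) [CommRing R] [CommRing R']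
    [Algebra R R'] (p n : ℕ) :
    R ⧸ Ideal.span {(p : R) ^ n} →+* R' ⧸ Ideal.span {(p : R') ^ n} :=
  Ideal.quotientMap (Ideal.span {(p : R') ^ n}) (algebraMap R R')
    (by
      rw [Ideal.span_le]
      rintro x rfl
      simp only [SetLike.mem_coe, Ideal.mem_comap, map_pow, map_natCast]
      exact Ideal.subset_span rfl)

/-!
Write `M` as the directed union of its submodules `M[pⁿ]`. Each `M[pⁿ]` is an `R ⧸ pⁿR`-module, so
faithful flatness of `R' ⧸ pⁿR'` makes `M[pⁿ] → M[pⁿ] ⊗ (R' ⧸ pⁿR')` injective, and this map factors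
through `M[pⁿ] → M[pⁿ] ⊗[R] R'`. A relation in `M ⊗[R] R'` only involves finitely many elements of
`M`, hence already holds over some `M[pⁿ]`. So `M → M ⊗[R] R'` is itself injective.
-/

open TensorProduct Submodule

theorem exists_le_of_fg_of_directed {ι R M : Type*} [Semiring R] [AddCommMonoid M] [Module R M]
    {P : ι → Submodule R M} (hP : Directed (· ≤ ·) P) (hcover : ∀ m, ∃ i, m ∈ P i)
    {Q : Submodule R M} (hQ : Q.FG) : ∃ i, Q ≤ P i := by
  have : Nonempty ι := (hcover 0).nonempty
  obtain ⟨s, rfl⟩ := hQ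
  have hs : (s : Set M) ⊆ ⋃ i, (P i : Set M) := fun m _ ↦ Set.mem_iUnion.mpr (hcover m)
  obtain ⟨i, hi⟩ := Directed.exists_mem_subset_of_finset_subset_biUnion hP hs
  exact ⟨i, span_le.mpr hi⟩

theorem exists_fg_tmul_eq_zero {R M N : Type*} [CommSemiring R] [AddCommMonoid M] [Module R M]
    [AddCommMonoid N] [Module R N] {m : M} {n : N} (h : m ⊗ₜ[R] n = 0) :
    ∃ (Q : Submodule R M) (hm : m ∈ Q), Q.FG ∧ (⟨m, hm⟩ : Q) ⊗ₜ[R] n = 0 := by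
  obtain ⟨Q, hmQ, hQ, hzero⟩ := TensorProduct.eq_zero_of_fg_of_subtype_eq_zero
    (fg_span_singleton m) (t := ⟨m, mem_span_singleton_self m⟩ ⊗ₜ[R] n) h
  exact ⟨Q, hmQ (mem_span_singleton_self m), hQ, hzero⟩

theorem injective_tmul_of_directed {ι R M N : Type*} [CommSemiring R] [AddCommGroup M] [Module R M]
    [AddCommMonoid N] [Module R N] {P : ι → Submodule R M} (hP : Directed (· ≤ ·) P)
    (hcover : ∀ m, ∃ i, m ∈ P i) {n : N}
    (hinj : ∀ i, Function.Injective fun x : P i ↦ x ⊗ₜ[R] n) :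
    Function.Injective fun m : M ↦ m ⊗ₜ[R] n := by
  refine (injective_iff_map_eq_zero ((TensorProduct.mk R M N).flip n)).mpr fun m hm ↦ ?_
  obtain ⟨Q, hmQ, hQ, hzero⟩ := exists_fg_tmul_eq_zero hm
  obtain ⟨i, hQi⟩ := exists_le_of_fg_of_directed hP hcover hQ
  have hzero_i : (⟨m, hQi hmQ⟩ : P i) ⊗ₜ[R] n = 0 :=
    congrArg ((inclusion hQi).rTensor N) hzero
  exact congrArg Subtype.val (hinj i (hzero_i.trans (zero_tmul _ n).symm))

theorem injective_tmul_one_of_faithfullyFlat (R R' S S' N : Type*) [CommRing R] [CommRing R']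
    [CommRing S] [CommRing S'] [Algebra R R'] [Algebra R S] [Algebra R S'] [Algebra R' S']
    [Algebra S S'] [IsScalarTower R R' S'] [IsScalarTower R S S'] [Module.FaithfullyFlat S S']
    [AddCommGroup N] [Module R N] [Module S N] [IsScalarTower R S N] :
    Function.Injective fun x : N ↦ x ⊗ₜ[R] (1 : R') := by
  let toBaseChange : N ⊗[R] R' →ₗ[R] N ⊗[S] S' :=
    mapOfCompatibleSMul S R R N S' ∘ₗ (IsScalarTower.toAlgHom R R' S').toLinearMap.lTensor N
  have hcomp : toBaseChange ∘ (fun x : N ↦ x ⊗ₜ[R] (1 : R')) =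
      TensorProduct.comm S S' N ∘ TensorProduct.mk S S' N 1 := by
    ext x
    simp [toBaseChange]
  refine .of_comp (f := toBaseChange) ?_
  rw [hcomp]
  exact (TensorProduct.comm S S' N).injective.comp
    (Module.FaithfullyFlat.tensorProduct_mk_injective N)

theorem injective_tmul_one_torsionBySet {R R' : Type*} [CommRing R] [CommRing R'] [Algebra R R']
    {I : Ideal R} {J : Ideal R'} (hIJ : I ≤ J.comap (algebraMap R R'))
    (hff : (Ideal.quotientMap J (algebraMap R R') hIJ).FaithfullyFlat)
    (M : Type*) [AddCommGroup M] [Module R M] :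
    Function.Injective fun x : torsionBySet R M I ↦ x ⊗ₜ[R] (1 : R') := by
  let : Algebra (R ⧸ I) (R' ⧸ J) := (Ideal.quotientMap J (algebraMap R R') hIJ).toAlgebra
  have : IsScalarTower R (R ⧸ I) (R' ⧸ J) := .of_algebraMap_eq fun _ ↦ rfl
  have : Module.FaithfullyFlat (R ⧸ I) (R' ⧸ J) := hff
  exact injective_tmul_one_of_faithfullyFlat R R' (R ⧸ I) (R' ⧸ J) (torsionBySet R M I)

theorem statement6_general {ι R R' M : Type*} [CommRing R] [CommRing R'] [Algebra R R']
    [AddCommGroup M] [Module R M] {I : ι → Ideal R} {J : ι → Ideal R'}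
    (hI : Directed (· ≥ ·) I) (hIJ : ∀ i, I i ≤ (J i).comap (algebraMap R R'))
    (hff : ∀ i, (Ideal.quotientMap (J i) (algebraMap R R') (hIJ i)).FaithfullyFlat)
    (htors : ∀ m : M, ∃ i, m ∈ torsionBySet R M (I i)) :
    Function.Injective fun m : M ↦ m ⊗ₜ[R] (1 : R') :=
  injective_tmul_of_directed
    (hI.mono_comp (g := fun K : Ideal R ↦ torsionBySet R M K) (· ≥ ·)
      fun _ _ h ↦ torsionBySet_le_torsionBySet_of_subset h)
    htors fun i ↦ injective_tmul_one_torsionBySet (hIJ i) (hff i) M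

theorem antitone_span_singleton_pow {R : Type*} [CommSemiring R] (a : R) :
    Antitone fun n : ℕ ↦ Ideal.span {a ^ n} := fun _ _ h ↦
  Ideal.span_singleton_le_span_singleton.mpr (pow_dvd_pow a h)

theorem mem_torsionBySet_span_singleton_pow_of_le {R M : Type*} [CommSemiring R] [AddCommMonoid M]
    [Module R M] {a : R} {m : M} {n k : ℕ} (hnk : n ≤ k) (hm : a ^ n • m = 0) :
    m ∈ torsionBySet R M (Ideal.span {a ^ k}) := by
  refine torsionBySet_le_torsionBySet_of_subset (antitone_span_singleton_pow a hnk) ?_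
  rwa [torsionBySet_ideal_span_singleton_eq, mem_torsionBy_iff]

/-- Let `p` be a prime and `R → R'` a ring homomorphism such that each induced map
`R/p^nR → R'/p^nR'` (for `n ≥ 1`) is faithfully flat.  If `M` is an `R`-module all of whose
elements are killed by a power of `p`, and `M ⊗_R R' = 0`, then `M = 0`. -/
theorem statement6 {R : Type u} {R' : Type v} [CommRing R] [CommRing R'] [Algebra R R']
    (p : ℕ) (hp : p.Prime)
    (hff : ∀ n : ℕ, 1 ≤ n →
      letI : Algebra (R ⧸ Ideal.span {(p : R) ^ n}) (R' ⧸ Ideal.span {(p : R') ^ n}) :=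
        (pPowQuotMap R R' p n).toAlgebra
      Module.FaithfullyFlat (R ⧸ Ideal.span {(p : R) ^ n}) (R' ⧸ Ideal.span {(p : R') ^ n}))
    (M : Type u) [AddCommGroup M] [Module R M]
    (htors : ∀ m : M, ∃ n : ℕ, (p : R) ^ n • m = 0)
    (hM : Subsingleton (TensorProduct R M R')) :
    Subsingleton M := by
  have hinj : Function.Injective fun m : M ↦ m ⊗ₜ[R] (1 : R') :=
    statement6_general
      ((antitone_span_singleton_pow (p : R)).comp_monotone Order.succ_mono).directed_ge _
      (fun n ↦ hff (n + 1) n.succ_pos)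
      fun m ↦ (htors m).imp fun n ↦ mem_torsionBySet_span_singleton_pow_of_le n.le_succ
  exact hinj.subsingleton
end
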